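/- Preimage of an ε-band under a projection layer: let d ≥ 1, R > 0, let β ∈ ℝ^d be a unit vector, a ≥ 0, c ∈ ℝ, and let π be the projection layer with parameters (β, a, c). Let g : B_R^d → ℝ be continuous and τ ≥ 0. Then there exists a continuous function g̃ : B_R^d → ℝ, agreeing with g on {x ∈ B_R^d : ⟪β,x⟫ + a ≥ 0}, such that {(x,y) ∈ B_R^d × ℝ : π(x,y) ∈ Γ_g} = Γ_{g̃} and {(x,y) ∈ B_R^d × ℝ : π(x,y) ∈ Σ_g^τ(B_R^d)} = Σ_{g̃}^τ(B_R^d), where Γ_f denotes the graph of f. -/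

import Mathlib

/-! On the half-space `⟪β, x⟫ + a ≥ 0` the layer is the identity; elsewhere it moves `x`
orthogonally onto the bounding hyperplane. That half-space contains the origin, so the move does
not increase the norm (`norm_add_max_smul_le`) and the ball is mapped into itself. On the second
coordinate the layer is the translation `y ↦ y + t(x) c`, so `π(x, y)` lies on the graph (or in
the band) of `g` exactly when `(x, y)` lies on the graph (or in the band) of
`g̃ x = g (x + t(x) β) - t(x) c`, which is continuous by composition. -/

open scoped RealInnerProductSpace

/-- The projection layer on `ℝ^d × ℝ` with parameters `(β, a, c)`:
`π(x,y) = (x + t(x)·β, y + t(x)·c)` where `t(x) = max(0, −(⟪β,x⟫ + a))`. -/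
noncomputable def projLayer {d : ℕ} (β : EuclideanSpace ℝ (Fin d)) (a c : ℝ) :
    EuclideanSpace ℝ (Fin d) × ℝ → EuclideanSpace ℝ (Fin d) × ℝ :=
  fun p => (p.1 + max 0 (-(⟪β, p.1⟫ + a)) • β, p.2 + max 0 (-(⟪β, p.1⟫ + a)) * c)

/-- The `ε`-band of `f : Ω → ℝ` over `ω`:
`Σ_f^ε(ω) = {(x,y) ∈ (Ω ∩ ω) × ℝ : |f(x) − y| ≤ ε}`. -/
def epsBand {d : ℕ} (f : EuclideanSpace ℝ (Fin d) → ℝ)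
    (Ω ω : Set (EuclideanSpace ℝ (Fin d))) (ε : ℝ) :
    Set (EuclideanSpace ℝ (Fin d) × ℝ) :=
  {p | p.1 ∈ Ω ∩ ω ∧ |f p.1 - p.2| ≤ ε}

/-- With `t = max 0 (-(⟪β, x⟫ + a))`, we have `‖x + t β‖² = ‖x‖² + t (2 ⟪β, x⟫ + t)`, and
`2 ⟪β, x⟫ + t = ⟪β, x⟫ - a ≤ 0` as soon as `t > 0`. -/
lemma norm_add_max_smul_le {d : ℕ} {β : EuclideanSpace ℝ (Fin d)} (hβ : ‖β‖ = 1) {a : ℝ}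
    (ha : 0 ≤ a) (x : EuclideanSpace ℝ (Fin d)) :
    ‖x + max 0 (-(⟪β, x⟫ + a)) • β‖ ≤ ‖x‖ := by
  rcases le_total 0 (⟪β, x⟫ + a) with h | h
  · rw [max_eq_left (neg_nonpos.2 h), zero_smul, add_zero]
  · rw [max_eq_right (neg_nonneg.2 h)]
    refine (sq_le_sq₀ (norm_nonneg _) (norm_nonneg _)).1 ?_
    rw [norm_add_sq_real, norm_smul, hβ, real_inner_smul_right, real_inner_comm β x, mul_one,
      Real.norm_eq_abs, sq_abs]
    nlinarith [mul_nonneg (neg_nonneg.2 h) (by linarith : 0 ≤ a - ⟪β, x⟫)]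

/-- **Preimage of an ε-band under a projection layer.** For a continuous
`g : B_R^d → ℝ`, a projection layer `π` with parameters `(β, a, c)`, `a ≥ 0`, and `τ ≥ 0`,
there is a continuous `g̃`, agreeing with `g` on the half-space `{⟪β,x⟫ + a ≥ 0}`, such that
within `B_R^d × ℝ` the preimage under `π` of the graph of `g` is the graph of `g̃` and the
preimage of the band `Σ_g^τ(B_R^d)` is the band `Σ_g̃^τ(B_R^d)`. -/
theorem preimage_of_band_under_projection_layer
    (d : ℕ) (hd : 1 ≤ d) (R : ℝ) (hR : 0 < R)
    (β : EuclideanSpace ℝ (Fin d)) (hβ : ‖β‖ = 1) (a c : ℝ) (ha : 0 ≤ a)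
    (g : EuclideanSpace ℝ (Fin d) → ℝ) (hg : ContinuousOn g (Metric.ball 0 R))
    (τ : ℝ) (hτ : 0 ≤ τ) :
    ∃ gt : EuclideanSpace ℝ (Fin d) → ℝ,
      ContinuousOn gt (Metric.ball 0 R) ∧
      (∀ x ∈ Metric.ball (0 : EuclideanSpace ℝ (Fin d)) R, 0 ≤ ⟪β, x⟫ + a → gt x = g x) ∧
      {p : EuclideanSpace ℝ (Fin d) × ℝ |
          p.1 ∈ Metric.ball (0 : EuclideanSpace ℝ (Fin d)) R ∧
          projLayer β a c p ∈ {q : EuclideanSpace ℝ (Fin d) × ℝ |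
            q.1 ∈ Metric.ball (0 : EuclideanSpace ℝ (Fin d)) R ∧ q.2 = g q.1}}
        = {p : EuclideanSpace ℝ (Fin d) × ℝ |
            p.1 ∈ Metric.ball (0 : EuclideanSpace ℝ (Fin d)) R ∧ p.2 = gt p.1} ∧
      {p : EuclideanSpace ℝ (Fin d) × ℝ |
          p.1 ∈ Metric.ball (0 : EuclideanSpace ℝ (Fin d)) R ∧
          projLayer β a c p ∈
            epsBand g (Metric.ball 0 R) (Metric.ball 0 R) τ}
        = epsBand gt (Metric.ball 0 R) (Metric.ball 0 R) τ := by
  have hball : ∀ x ∈ Metric.ball (0 : EuclideanSpace ℝ (Fin d)) R,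
      x + max 0 (-(⟪β, x⟫ + a)) • β ∈ Metric.ball (0 : EuclideanSpace ℝ (Fin d)) R := by
    intro x hx
    rw [mem_ball_zero_iff] at hx ⊢
    exact (norm_add_max_smul_le hβ ha x).trans_lt hx
  refine ⟨fun x => g (x + max 0 (-(⟪β, x⟫ + a)) • β) - max 0 (-(⟪β, x⟫ + a)) * c,
    ?_, ?_, ?_, ?_⟩
  · refine ContinuousOn.sub (hg.comp (Continuous.continuousOn ?_) hball)
      (Continuous.continuousOn ?_)
    all_goals fun_prop
  · intro x _ h
    simp only [max_eq_left (neg_nonpos.2 h), zero_smul, add_zero, zero_mul, sub_zero]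
  · ext ⟨x, y⟩
    simp only [projLayer, Set.mem_ofPred_eq]
    refine and_congr_right fun hx => ?_
    rw [and_iff_right (hball x hx), eq_sub_iff_add_eq]
  · ext ⟨x, y⟩
    simp only [projLayer, epsBand, Set.inter_self, Set.mem_ofPred_eq]
    refine and_congr_right fun hx => ?_
    rw [and_iff_right (hball x hx), sub_sub, add_comm y]
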